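/- arXiv:math-ph/0503023 — 2 statements merged into one kernel-verified Lean document; each statement's English description precedes it below -/
import Mathlib

section
/- Second Griffiths-type inequality on the Nishimori line: for every pair of bonds b, b' ∈ B, the quenched correlation [⟨S_b⟩] is differentiable in x_{b'} (total derivative, taking into account the dependence of both the Gaussian mean and the potential on x_{b'}) and satisfies d[⟨S_b⟩]/dx_{b'} = 2 x_{b'} [(⟨S_b S_{b'}⟩ − ⟨S_b⟩⟨S_{b'}⟩)²], which is nonnegative; hence [⟨S_b⟩] is nondecreasing with respect to each parameter x_{b'}. -/
open MeasureTheory ProbabilityTheory Filter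

noncomputable section

/-- The real value ±1 of a Boolean spin. -/
def spin (s : Bool) : ℝ := if s then 1 else -1

/-- The bond spin `S_b = S_n S_{n'}` for a bond `b` with endpoints `ep b = (n, n')`. -/
def bondSpin {V ι : Type*} (ep : ι → V × V) (S : V → Bool) (b : ι) : ℝ :=
  spin (S (ep b).1) * spin (S (ep b).2)

/-- The potential `U(j, S) = Σ_b x_b j_b S_b`. -/
def potential {V ι : Type*} [Fintype ι] (ep : ι → V × V) (x j : ι → ℝ)
    (S : V → Bool) : ℝ :=
  ∑ b, x b * j b * bondSpin ep S b

/-- The partition function `Z(j) = Σ_S exp U(j,S)`. -/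
def partitionFn {V ι : Type*} [Fintype V] [DecidableEq V] [Fintype ι]
    (ep : ι → V × V) (x j : ι → ℝ) : ℝ :=
  ∑ S : V → Bool, Real.exp (potential ep x j S)

/-- The Boltzmann–Gibbs expectation `⟨f⟩` at fixed disorder `j`. -/
def gibbs {V ι : Type*} [Fintype V] [DecidableEq V] [Fintype ι]
    (ep : ι → V × V) (x j : ι → ℝ) (f : (V → Bool) → ℝ) : ℝ :=
  (∑ S : V → Bool, f S * Real.exp (potential ep x j S)) / partitionFn ep x j

/-- The law of the couplings: independent Gaussians, `j_b` of mean `x_b` and variance 1. -/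
def couplings {ι : Type*} [Fintype ι] (x : ι → ℝ) : Measure (ι → ℝ) :=
  Measure.pi fun b => gaussianReal (x b) 1

/-- The quenched average `[F]`. -/
def quenched {ι : Type*} [Fintype ι] (x : ι → ℝ) (F : (ι → ℝ) → ℝ) : ℝ :=
  ∫ j, F j ∂(couplings x)

/-- The quenched pressure `P({x}) = [ln Z]`. -/
def pressure {V ι : Type*} [Fintype V] [DecidableEq V] [Fintype ι]
    (ep : ι → V × V) (x : ι → ℝ) : ℝ :=
  quenched x fun j => Real.log (partitionFn ep x j)

/-- Gibbs expectation as a function of the energies. -/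
def gbU {V : Type*} [Fintype V] [DecidableEq V] (U f : (V → Bool) → ℝ) : ℝ :=
  (∑ S : V → Bool, f S * Real.exp (U S)) / ∑ S : V → Bool, Real.exp (U S)

lemma zU_pos {V : Type*} [Fintype V] [DecidableEq V] (U : (V → Bool) → ℝ) :
    0 < ∑ S : V → Bool, Real.exp (U S) :=
  Finset.sum_pos (fun _ _ => Real.exp_pos _) Finset.univ_nonempty

lemma gbU_abs_le {V : Type*} [Fintype V] [DecidableEq V] (U f : (V → Bool) → ℝ)
    (hf : ∀ S, |f S| ≤ 1) : |gbU U f| ≤ 1 := by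
  unfold gbU
  rw [abs_div, abs_of_pos (zU_pos U), div_le_one (zU_pos U)]
  refine (Finset.abs_sum_le_sum_abs _ _).trans (Finset.sum_le_sum fun S _ => ?_)
  rw [abs_mul, Real.abs_exp]
  exact mul_le_of_le_one_left (Real.exp_pos _).le (hf S)

lemma gbU_hasDerivAt {V : Type*} [Fintype V] [DecidableEq V] (U : ℝ → (V → Bool) → ℝ)
    (f a : (V → Bool) → ℝ) (c t : ℝ)
    (hU : ∀ S, HasDerivAt (fun t => U t S) (c * a S) t) :
    HasDerivAt (fun t => gbU (U t) f)
      (c * (gbU (U t) (fun S => f S * a S) - gbU (U t) f * gbU (U t) a)) t := by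
  have h1 : HasDerivAt (fun t => ∑ S : V → Bool, f S * Real.exp (U t S))
      (∑ S : V → Bool, f S * (Real.exp (U t S) * (c * a S))) t :=
    HasDerivAt.fun_sum fun S _ => ((hU S).exp).const_mul (f S)
  have h2 : HasDerivAt (fun t => ∑ S : V → Bool, Real.exp (U t S))
      (∑ S : V → Bool, (Real.exp (U t S) * (c * a S))) t :=
    HasDerivAt.fun_sum fun S _ => ((hU S).exp)
  have hz := (zU_pos (U t)).ne'
  have h3 := h1.div h2 hz
  refine h3.congr_deriv ?_
  have e1 : (∑ S : V → Bool, f S * (Real.exp (U t S) * (c * a S)))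
      = c * ∑ S : V → Bool, f S * a S * Real.exp (U t S) := by
    rw [Finset.mul_sum]; exact Finset.sum_congr rfl fun S _ => by ring
  have e2 : (∑ S : V → Bool, (Real.exp (U t S) * (c * a S)))
      = c * ∑ S : V → Bool, a S * Real.exp (U t S) := by
    rw [Finset.mul_sum]; exact Finset.sum_congr rfl fun S _ => by ring
  rw [e1, e2]
  unfold gbU
  field_simp

lemma spin_sq (s : Bool) : spin s * spin s = 1 := by cases s <;> simp [spin]

lemma bondSpin_sq {V ι : Type*} (ep : ι → V × V) (S : V → Bool) (b : ι) :
    bondSpin ep S b * bondSpin ep S b = 1 := by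
  unfold bondSpin
  linear_combination (spin (S (ep b).2)) ^ 2 * spin_sq (S (ep b).1) + spin_sq (S (ep b).2)

lemma abs_le_one_of_sq {a : ℝ} (h : a * a = 1) : |a| ≤ 1 := by
  rw [abs_le]; constructor <;> nlinarith

/-- Gauge action on spins. -/
def gm {V : Type*} (σ S : V → Bool) : V → Bool := fun v => σ v == S v

lemma gm_invol {V : Type*} (σ : V → Bool) : Function.Involutive (gm σ) := by
  intro S; funext v; simp only [gm]; cases σ v <;> cases S v <;> rfl

lemma bondSpin_gm {V ι : Type*} (ep : ι → V × V) (σ S : V → Bool) (b : ι) :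
    bondSpin ep (gm σ S) b = bondSpin ep σ b * bondSpin ep S b := by
  have h : ∀ a b : Bool, spin (a == b) = spin a * spin b := by
    intro a b; cases a <;> cases b <;> simp [spin]
  simp only [bondSpin, gm, h]; ring

/-- Gauge action on couplings. -/
def gj {V ι : Type*} (ep : ι → V × V) (σ : V → Bool) (j : ι → ℝ) : ι → ℝ :=
  fun b => bondSpin ep σ b * j b

lemma gibbs_gj {V ι : Type*} [Fintype V] [DecidableEq V] [Fintype ι]
    (ep : ι → V × V) (x j : ι → ℝ) (A : (V → Bool) → ℝ) (σ : V → Bool)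
    (hA : ∀ S, A (gm σ S) = A σ * A S) (hA2 : A σ * A σ = 1) :
    gibbs ep x (gj ep σ j) A = A σ * gibbs ep x j A := by
  have hp : ∀ S, potential ep x (gj ep σ j) S = potential ep x j (gm σ S) := by
    intro S
    unfold potential
    refine Finset.sum_congr rfl fun b _ => ?_
    rw [bondSpin_gm]; simp only [gj]; ring
  have e := (gm_invol σ).toPerm
  unfold gibbs partitionFn
  simp only [hp]
  have e1 : (∑ S : V → Bool, Real.exp (potential ep x j (gm σ S)))
      = ∑ S : V → Bool, Real.exp (potential ep x j S) :=
    Equiv.sum_comp ((gm_invol σ).toPerm) (fun S => Real.exp (potential ep x j S))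
  have e2 : (∑ S : V → Bool, A S * Real.exp (potential ep x j (gm σ S)))
      = A σ * ∑ S : V → Bool, A S * Real.exp (potential ep x j S) := by
    rw [← Equiv.sum_comp ((gm_invol σ).toPerm) (fun S => A S * Real.exp (potential ep x j S)),
      Finset.mul_sum]
    refine Finset.sum_congr rfl fun S _ => ?_
    simp only [Function.Involutive.coe_toPerm, hA]
    linear_combination (-(A S * Real.exp (potential ep x j (gm σ S)))) * hA2
  rw [e1, e2, mul_div_assoc]

lemma gibbs_measurable {V ι : Type*} [Fintype V] [DecidableEq V] [Fintype ι]
    (ep : ι → V × V) (x : ι → ℝ) (A : (V → Bool) → ℝ) :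
    Measurable (fun j => gibbs ep x j A) := by
  unfold gibbs partitionFn potential
  fun_prop

lemma gibbs_abs_le {V ι : Type*} [Fintype V] [DecidableEq V] [Fintype ι]
    (ep : ι → V × V) (x j : ι → ℝ) (A : (V → Bool) → ℝ) (hA : ∀ S, |A S| ≤ 1) :
    |gibbs ep x j A| ≤ 1 := gbU_abs_le (potential ep x j) A hA

instance couplings_prob {ι : Type*} [Fintype ι] (x : ι → ℝ) :
    IsProbabilityMeasure (couplings x) := by
  unfold couplings; infer_instance

/-- the joint density -/
def dens {ι : Type*} [Fintype ι] (x : ι → ℝ) (j : ι → ℝ) : ℝ :=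
  ∏ b, gaussianPDFReal (x b) 1 (j b)

lemma dens_nonneg {ι : Type*} [Fintype ι] (x j : ι → ℝ) : 0 ≤ dens x j :=
  Finset.prod_nonneg fun _ _ => gaussianPDFReal_nonneg _ _ _

lemma dens_measurable {ι : Type*} [Fintype ι] (x : ι → ℝ) : Measurable (dens x) := by
  unfold dens
  exact Finset.measurable_prod _ fun b _ =>
    (measurable_gaussianPDFReal (x b) 1).comp (measurable_pi_apply b)

lemma couplings_eq {ι : Type*} [Fintype ι] (x : ι → ℝ) :
    couplings x = (volume : Measure (ι → ℝ)).withDensity (fun j => ENNReal.ofReal (dens x j)) := by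
  unfold couplings
  refine Measure.pi_eq fun s hs => ?_
  rw [withDensity_apply _ (MeasurableSet.univ_pi hs), volume_pi, Measure.restrict_pi_pi]
  rw [← ofReal_integral_eq_lintegral_ofReal]
  · unfold dens
    rw [integral_fintype_prod_eq_prod (𝕜 := ℝ) (fun b y => gaussianPDFReal (x b) 1 y),
      ENNReal.ofReal_prod_of_nonneg]
    · exact Finset.prod_congr rfl fun b _ =>
        (gaussianReal_apply_eq_integral (x b) one_ne_zero (s b)).symm
    · intro b _
      exact integral_nonneg fun y => gaussianPDFReal_nonneg _ _ _
  · unfold dens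
    exact Integrable.fintype_prod_dep
      (fun b => (integrable_gaussianPDFReal (x b) 1).mono_measure Measure.restrict_le_self)
  · exact Eventually.of_forall fun j => dens_nonneg x j

lemma integral_couplings {ι : Type*} [Fintype ι] (x : ι → ℝ) (H : (ι → ℝ) → ℝ) :
    ∫ j, H j ∂(couplings x) = ∫ j, dens x j * H j := by
  rw [couplings_eq, integral_withDensity_eq_integral_toReal_smul
    (dens_measurable x).ennreal_ofReal (Eventually.of_forall fun _ => ENNReal.ofReal_lt_top)]
  simp [ENNReal.toReal_ofReal (dens_nonneg x _)]

lemma integrable_couplings {ι : Type*} [Fintype ι] (x : ι → ℝ) (H : (ι → ℝ) → ℝ)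
    (hH : Integrable H (couplings x)) : Integrable (fun j => dens x j * H j) := by
  rw [couplings_eq, integrable_withDensity_iff_integrable_smul'
    (dens_measurable x).ennreal_ofReal (Eventually.of_forall fun _ => ENNReal.ofReal_lt_top)] at hH
  simpa [ENNReal.toReal_ofReal (dens_nonneg x _)] using hH

lemma gj_preserving {V ι : Type*} [Fintype ι] (ep : ι → V × V) (σ : V → Bool) (x : ι → ℝ) :
    MeasurePreserving (gj ep σ) (couplings x) (couplings (gj ep σ x)) := by
  unfold couplings
  refine measurePreserving_pi _ _ (f := fun b y => bondSpin ep σ b * y) fun b => ?_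
  refine ⟨by fun_prop, ?_⟩
  rw [gaussianReal_map_const_mul]
  congr 1
  ext
  simp [pow_two, bondSpin_sq]

lemma dens_gj {V ι : Type*} [Fintype ι] (ep : ι → V × V) (σ : V → Bool) (x j : ι → ℝ) :
    dens (gj ep σ x) j =
      (∏ b, ((√(2 * Real.pi))⁻¹ * Real.exp (-(x b ^ 2 + j b ^ 2) / 2)))
        * Real.exp (potential ep x j σ) := by
  unfold dens potential
  rw [Real.exp_sum, ← Finset.prod_mul_distrib]
  refine Finset.prod_congr rfl fun b _ => ?_
  rw [gaussianPDFReal_def, mul_assoc _ (Real.exp _) (Real.exp _), ← Real.exp_add]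
  simp only [gj, NNReal.coe_one, mul_one]
  congr 2
  linear_combination (-(x b ^ 2) / 2) * bondSpin_sq ep σ b

lemma integrable_of_bdd {Ω : Type*} [MeasurableSpace Ω] (μ : Measure Ω) [IsProbabilityMeasure μ]
    (G : Ω → ℝ) (hG : Measurable G) (C : ℝ) (hC : ∀ j, |G j| ≤ C) : Integrable G μ :=
  Integrable.of_bound hG.aestronglyMeasurable C (Eventually.of_forall hC)

lemma nishimori {V ι : Type*} [Fintype V] [DecidableEq V] [Fintype ι]
    (ep : ι → V × V) (x : ι → ℝ) (A : (V → Bool) → ℝ)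
    (hA : ∀ σ S, A (gm σ S) = A σ * A S) (hA2 : ∀ σ, A σ * A σ = 1)
    (G : (ι → ℝ) → ℝ) (hG : Measurable G) (C : ℝ) (hC : ∀ j, |G j| ≤ C)
    (hGA : ∀ σ j, G (gj ep σ j) = A σ * G j) :
    ∫ j, G j ∂(couplings x) = ∫ j, G j * gibbs ep x j A ∂(couplings x) := by
  have hA1 : ∀ S, |A S| ≤ 1 := fun S => abs_le_one_of_sq (hA2 S)
  have hGm : Measurable fun j => G j * gibbs ep x j A := hG.mul (gibbs_measurable ep x A)
  have hGb : ∀ j, |G j * gibbs ep x j A| ≤ C := by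
    intro j
    rw [abs_mul]
    exact (mul_le_of_le_one_right (abs_nonneg _) (gibbs_abs_le ep x j A hA1)).trans (hC j)
  have key : ∑ σ : V → Bool, ∫ j, A σ * G j ∂(couplings (gj ep σ x))
      = ∑ σ : V → Bool, ∫ j, G j * gibbs ep x j A ∂(couplings (gj ep σ x)) := by
    simp only [integral_couplings]
    rw [← integral_finsetSum, ← integral_finsetSum]
    · refine integral_congr_ae (Eventually.of_forall fun j => ?_)
      simp only [dens_gj]
      set K := (∏ b, ((√(2 * Real.pi))⁻¹ * Real.exp (-(x b ^ 2 + j b ^ 2) / 2)))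
      have h1 : ∑ σ : V → Bool, K * Real.exp (potential ep x j σ) * (A σ * G j)
          = K * G j * ∑ σ : V → Bool, A σ * Real.exp (potential ep x j σ) := by
        rw [Finset.mul_sum]; exact Finset.sum_congr rfl fun S _ => by ring
      have h2 : ∑ σ : V → Bool, K * Real.exp (potential ep x j σ) * (G j * gibbs ep x j A)
          = K * G j * (gibbs ep x j A * ∑ σ : V → Bool, Real.exp (potential ep x j σ)) := by
        rw [Finset.mul_sum, Finset.mul_sum]; exact Finset.sum_congr rfl fun S _ => by ring
      rw [h1, h2]
      congr 1
      unfold gibbs partitionFn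
      rw [div_mul_cancel₀ _ (zU_pos (potential ep x j)).ne']
    · intro σ _
      exact integrable_couplings _ _ (integrable_of_bdd _ _ hGm C hGb)
    · intro σ _
      exact integrable_couplings _ _ ((integrable_of_bdd _ _ hG C hC).const_mul _)
  have hcv : ∀ σ : V → Bool, ∀ H : (ι → ℝ) → ℝ, Measurable H →
      ∫ j, H j ∂(couplings (gj ep σ x)) = ∫ j, H (gj ep σ j) ∂(couplings x) := by
    intro σ H hH
    rw [← (gj_preserving ep σ x).map_eq, integral_map (gj_preserving ep σ x).measurable.aemeasurable
      hH.aestronglyMeasurable]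
  have l : ∀ σ : V → Bool, ∫ j, A σ * G j ∂(couplings (gj ep σ x)) = ∫ j, G j ∂(couplings x) := by
    intro σ
    rw [hcv σ _ (hG.const_mul _)]
    refine integral_congr_ae (Eventually.of_forall fun j => ?_)
    simp only [hGA]
    linear_combination G j * hA2 σ
  have r : ∀ σ : V → Bool, ∫ j, G j * gibbs ep x j A ∂(couplings (gj ep σ x))
      = ∫ j, G j * gibbs ep x j A ∂(couplings x) := by
    intro σ
    rw [hcv σ _ hGm]
    refine integral_congr_ae (Eventually.of_forall fun j => ?_)
    simp only [hGA, gibbs_gj ep x j A σ (hA σ) (hA2 σ)]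
    linear_combination G j * gibbs ep x j A * hA2 σ
  simp only [l, r, Finset.sum_const, nsmul_eq_mul] at key
  exact mul_left_cancel₀ (by simp) key

lemma stein_one (f f' : ℝ → ℝ) (C : ℝ) (hf : ∀ y, HasDerivAt f (f' y) y)
    (hfC : ∀ y, |f y| ≤ C) (hfC' : ∀ y, |f' y| ≤ C) :
    ∫ y, y * f y ∂(gaussianReal 0 1) = ∫ y, f' y ∂(gaussianReal 0 1) := by
  have hfm : Measurable f :=
    (continuous_iff_continuousAt.2 fun y => (hf y).continuousAt).measurable
  have hfm' : Measurable f' := by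
    have : f' = deriv f := funext fun y => (hf y).deriv.symm
    rw [this]; exact measurable_deriv f
  have hid : Integrable (fun y : ℝ => y) (gaussianReal 0 1) :=
    (memLp_id_gaussianReal' 1 (by simp)).integrable le_rfl
  have hd : ∀ H : ℝ → ℝ, Integrable H (gaussianReal 0 1) →
      Integrable (fun y => gaussianPDFReal 0 1 y * H y) := by
    intro H hH
    rw [gaussianReal_of_var_ne_zero _ one_ne_zero, integrable_withDensity_iff_integrable_smul'
      (measurable_gaussianPDF 0 1) (Eventually.of_forall fun _ => gaussianPDF_lt_top)] at hH
    simpa [toReal_gaussianPDF] using hH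
  have i1 : Integrable (fun y => y * f y) (gaussianReal 0 1) :=
    hid.mul_bdd hfm.aestronglyMeasurable (Eventually.of_forall hfC)
  have i2 := integrable_of_bdd (gaussianReal 0 1) f hfm C hfC
  have i3 := integrable_of_bdd (gaussianReal 0 1) f' hfm' C hfC'
  have hpdf : ∀ y, HasDerivAt (gaussianPDFReal 0 1) (-y * gaussianPDFReal 0 1 y) y := by
    intro y
    rw [gaussianPDFReal_def]
    have h : HasDerivAt (fun x : ℝ => -(x - 0) ^ 2 / (2 * ((1 : NNReal) : ℝ))) (-y) y := by
      have := (((hasDerivAt_id y).sub_const 0).pow 2).neg.div_const (2 * ((1 : NNReal) : ℝ))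
      refine this.congr_deriv ?_
      simp
      ring
    refine (h.exp.const_mul _).congr_deriv ?_
    ring
  have := integral_mul_deriv_eq_deriv_mul_of_integrable (u := f) (u' := f')
    (v := gaussianPDFReal 0 1) (v' := fun y => -y * gaussianPDFReal 0 1 y)
    (fun y _ => hf y) (fun y _ => hpdf y)
    ((hd _ i1).neg.congr (Eventually.of_forall fun y => by simp; ring))
    ((hd _ i3).congr (Eventually.of_forall fun y => by simp; ring))
    ((hd _ i2).congr (Eventually.of_forall fun y => by simp; ring))
  rw [integral_gaussianReal_eq_integral_smul one_ne_zero,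
    integral_gaussianReal_eq_integral_smul one_ne_zero]
  simp only [smul_eq_mul]
  have e1 : ∫ y, gaussianPDFReal 0 1 y * (y * f y)
      = - ∫ y, f y * (-y * gaussianPDFReal 0 1 y) := by
    rw [← integral_neg]
    exact integral_congr_ae (Eventually.of_forall fun y => by simp; ring)
  rw [e1, this, neg_neg]
  exact integral_congr_ae (Eventually.of_forall fun y => by simp; ring)

lemma update_preserving {ι : Type*} [Fintype ι] [DecidableEq ι] (x : ι → ℝ) (b : ι) :
    MeasurePreserving (fun p : (ι → ℝ) × ℝ => Function.update p.1 b p.2)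
      ((couplings x).prod (gaussianReal (x b) 1)) (couplings x) := by
  have hm : Measurable (fun p : (ι → ℝ) × ℝ => Function.update p.1 b p.2) := by
    refine measurable_pi_lambda _ fun i => ?_
    by_cases h : i = b
    · subst h; simpa using measurable_snd
    · simp only [Function.update_of_ne h]; fun_prop
  refine ⟨hm, ?_⟩
  conv_rhs => unfold couplings
  refine (Measure.pi_eq fun s hs => ?_).symm
  rw [Measure.map_apply hm (MeasurableSet.univ_pi hs)]
  have : (fun p : (ι → ℝ) × ℝ => Function.update p.1 b p.2) ⁻¹' (Set.univ.pi s)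
      = (Set.univ.pi (Function.update s b Set.univ)) ×ˢ (s b) := by
    ext p
    simp only [Set.mem_preimage, Set.mem_pi, Set.mem_univ, true_imp_iff, Set.mem_prod]
    constructor
    · intro h
      refine ⟨fun i => ?_, by simpa using h b⟩
      by_cases hi : i = b
      · subst hi; simp
      · simpa [Function.update_of_ne hi] using h i
    · rintro ⟨h, h'⟩ i
      by_cases hi : i = b
      · subst hi; simpa using h'
      · simpa [Function.update_of_ne hi] using h i
  rw [this, Measure.prod_prod]
  unfold couplings
  rw [Measure.pi_pi, ← Finset.mul_prod_erase _ _ (Finset.mem_univ b),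
    ← Finset.mul_prod_erase Finset.univ (fun i => gaussianReal (x i) 1 (s i)) (Finset.mem_univ b)]
  simp only [Function.update_self, measure_univ, one_mul]
  rw [mul_comm]
  congr 1
  refine Finset.prod_congr rfl fun i hi => ?_
  rw [Function.update_of_ne (Finset.ne_of_mem_erase hi)]

lemma integrable_coord {ι : Type*} [Fintype ι] (x : ι → ℝ) (b : ι) :
    Integrable (fun g : ι → ℝ => g b) (couplings x) := by
  unfold couplings
  exact integrable_comp_eval (μ := fun b => gaussianReal (x b) 1) (i := b) (f := fun y : ℝ => y)
    ((memLp_id_gaussianReal' 1 (by simp)).integrable le_rfl)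

lemma stein_pi {ι : Type*} [Fintype ι] [DecidableEq ι] (b : ι) (G G' : (ι → ℝ) → ℝ)
    (hG : Measurable G) (hG' : Measurable G') (C : ℝ) (hC : ∀ g, |G g| ≤ C)
    (hC' : ∀ g, |G' g| ≤ C)
    (hd : ∀ g y, HasDerivAt (fun y => G (Function.update g b y)) (G' (Function.update g b y)) y) :
    ∫ g, g b * G g ∂(couplings (0 : ι → ℝ)) = ∫ g, G' g ∂(couplings (0 : ι → ℝ)) := by
  have hp := update_preserving (0 : ι → ℝ) b
  have i1 : Integrable (fun g : ι → ℝ => g b * G g) (couplings 0) :=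
    (integrable_coord 0 b).mul_bdd hG.aestronglyMeasurable (Eventually.of_forall hC)
  have i2 := integrable_of_bdd (couplings 0) G' hG' C hC'
  have cv : ∀ H : (ι → ℝ) → ℝ, Integrable H (couplings 0) →
      ∫ g, H g ∂(couplings (0 : ι → ℝ)) = ∫ g, ∫ y, H (Function.update g b y) ∂(gaussianReal 0 1)
        ∂(couplings (0 : ι → ℝ)) := by
    intro H hH
    have h1 : Integrable (fun p : (ι → ℝ) × ℝ => H (Function.update p.1 b p.2))
        ((couplings 0).prod (gaussianReal 0 1)) := hp.integrable_comp_of_integrable hH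
    rw [← integral_prod _ h1]
    have h2 := hH.aestronglyMeasurable
    conv_lhs => rw [← hp.map_eq]
    rw [← hp.map_eq] at h2
    exact integral_map hp.measurable.aemeasurable h2
  rw [cv _ i1, cv _ i2]
  refine integral_congr_ae (Eventually.of_forall fun g => ?_)
  simp only [Function.update_self]
  exact stein_one _ _ C (hd g) (fun y => hC _) (fun y => hC' _)

lemma shift_preserving {ι : Type*} [Fintype ι] (x : ι → ℝ) :
    MeasurePreserving (fun g : ι → ℝ => fun b => x b + g b) (couplings 0) (couplings x) := by
  unfold couplings
  refine measurePreserving_pi _ _ (f := fun b y => x b + y) fun b => ?_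
  refine ⟨by fun_prop, ?_⟩
  rw [gaussianReal_map_const_add]
  simp

lemma quenched_shift {ι : Type*} [Fintype ι] (x : ι → ℝ) (H : (ι → ℝ) → ℝ) (hH : Measurable H) :
    quenched x H = ∫ g, H (fun b => x b + g b) ∂(couplings (0 : ι → ℝ)) := by
  unfold quenched
  rw [← (shift_preserving x).map_eq, integral_map (shift_preserving x).measurable.aemeasurable
      hH.aestronglyMeasurable]

/-- The truncated correlation. -/
def tr {V ι : Type*} [Fintype V] [DecidableEq V] [Fintype ι] (ep : ι → V × V) (b b' : ι)
    (x j : ι → ℝ) : ℝ :=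
  gibbs ep x j (fun S => bondSpin ep S b * bondSpin ep S b') -
    gibbs ep x j (fun S => bondSpin ep S b) * gibbs ep x j (fun S => bondSpin ep S b')

section main
variable {V ι : Type*} [Fintype V] [DecidableEq V] [Fintype ι]
  (ep : ι → V × V) (b b' : ι) (x : ι → ℝ)

lemma bs_abs (b : ι) (S : V → Bool) : |bondSpin ep S b| ≤ 1 :=
  abs_le_one_of_sq (bondSpin_sq ep S b)

lemma bs2_sq (S : V → Bool) : (bondSpin ep S b * bondSpin ep S b') *
    (bondSpin ep S b * bondSpin ep S b') = 1 := by
  linear_combination (bondSpin ep S b) ^ 2 * bondSpin_sq ep S b' + bondSpin_sq ep S b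

lemma tr_measurable : Measurable (tr ep b b' x) := by
  unfold tr
  exact (gibbs_measurable _ _ _).sub ((gibbs_measurable _ _ _).mul (gibbs_measurable _ _ _))

lemma tr_abs (j : ι → ℝ) : |tr ep b b' x j| ≤ 2 := by
  have h1 := gibbs_abs_le ep x j (fun S => bondSpin ep S b * bondSpin ep S b')
    (fun S => abs_le_one_of_sq (bs2_sq ep b b' S))
  have h2 := gibbs_abs_le ep x j (fun S => bondSpin ep S b) (bs_abs ep b)
  have h3 := gibbs_abs_le ep x j (fun S => bondSpin ep S b') (bs_abs ep b')
  unfold tr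
  refine (abs_sub _ _).trans ?_
  rw [abs_mul]
  have := mul_le_one₀ h2 (abs_nonneg _) h3
  linarith

/-- The combined Nishimori identity. -/
lemma nishimori_tr :
    ∫ j, tr ep b b' x j * (1 - gibbs ep x j (fun S => bondSpin ep S b')) ∂(couplings x)
      = ∫ j, tr ep b b' x j ^ 2 ∂(couplings x) := by
  set P : (ι → ℝ) → ℝ := fun j => gibbs ep x j (fun S => bondSpin ep S b * bondSpin ep S b') with hP
  set Q : (ι → ℝ) → ℝ := fun j => gibbs ep x j (fun S => bondSpin ep S b) with hQ
  set R : (ι → ℝ) → ℝ := fun j => gibbs ep x j (fun S => bondSpin ep S b') with hR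
  have mP : Measurable P := gibbs_measurable _ _ _
  have mQ : Measurable Q := gibbs_measurable _ _ _
  have mR : Measurable R := gibbs_measurable _ _ _
  have aP : ∀ j, |P j| ≤ 1 := fun j => gibbs_abs_le ep x j _
    (fun S => abs_le_one_of_sq (bs2_sq ep b b' S))
  have aQ : ∀ j, |Q j| ≤ 1 := fun j => gibbs_abs_le ep x j _ (bs_abs ep b)
  have aR : ∀ j, |R j| ≤ 1 := fun j => gibbs_abs_le ep x j _ (bs_abs ep b')
  have gP : ∀ σ j, P (gj ep σ j) = bondSpin ep σ b * bondSpin ep σ b' * P j := fun σ j =>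
    gibbs_gj ep x j (fun S => bondSpin ep S b * bondSpin ep S b') σ
      (fun S => by simp only [bondSpin_gm]; ring) (bs2_sq ep b b' σ)
  have gQ : ∀ σ j, Q (gj ep σ j) = bondSpin ep σ b * Q j := fun σ j =>
    gibbs_gj ep x j (fun S => bondSpin ep S b) σ
      (fun S => by simp only [bondSpin_gm]) (bondSpin_sq ep σ b)
  have gR : ∀ σ j, R (gj ep σ j) = bondSpin ep σ b' * R j := fun σ j =>
    gibbs_gj ep x j (fun S => bondSpin ep S b') σ
      (fun S => by simp only [bondSpin_gm]) (bondSpin_sq ep σ b')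
  have mul1 : ∀ u v : ℝ, |u| ≤ 1 → |v| ≤ 1 → |u * v| ≤ 1 := fun u v hu hv => by
    rw [abs_mul]; exact mul_le_one₀ hu (abs_nonneg _) hv
  have n1 : ∫ j, tr ep b b' x j ∂(couplings x) = ∫ j, tr ep b b' x j * P j ∂(couplings x) := by
    refine nishimori ep x (fun S => bondSpin ep S b * bondSpin ep S b')
      (fun σ S => by simp only [bondSpin_gm]; ring) (bs2_sq ep b b') _ (tr_measurable ep b b' x) 2
      (tr_abs ep b b' x) ?_
    intro σ j
    change P (gj ep σ j) - Q (gj ep σ j) * R (gj ep σ j) = _ * (P j - Q j * R j)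
    rw [gP, gQ, gR]; ring
  have n2 : ∫ j, tr ep b b' x j * R j ∂(couplings x)
      = ∫ j, tr ep b b' x j * R j * Q j ∂(couplings x) := by
    refine nishimori ep x (fun S => bondSpin ep S b)
      (fun σ S => by simp only [bondSpin_gm]) (fun σ => bondSpin_sq ep σ b) _
      ((tr_measurable ep b b' x).mul mR) 2 ?_ ?_
    · intro j
      rw [abs_mul]
      exact (mul_le_of_le_one_right (abs_nonneg _) (aR j)).trans (tr_abs ep b b' x j)
    intro σ j
    change (P (gj ep σ j) - Q (gj ep σ j) * R (gj ep σ j)) * R (gj ep σ j)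
      = _ * ((P j - Q j * R j) * R j)
    rw [gP, gQ, gR]
    linear_combination bondSpin ep σ b * (P j - Q j * R j) * R j * bondSpin_sq ep σ b'
  have mT := tr_measurable ep b b' x
  have bT : ∀ H : (ι → ℝ) → ℝ, Measurable H → (∀ j, |H j| ≤ 1) →
      Integrable (fun j => tr ep b b' x j * H j) (couplings x) := by
    intro H mH aH
    refine integrable_of_bdd _ _ (mT.mul mH) 2 fun j => ?_
    rw [abs_mul]
    exact (mul_le_of_le_one_right (abs_nonneg _) (aH j)).trans (tr_abs ep b b' x j)
  have i0 := integrable_of_bdd (couplings x) _ mT 2 (tr_abs ep b b' x)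
  have i1 := bT P mP aP
  have i2 := bT R mR aR
  have i3 := bT (fun j => R j * Q j) (mR.mul mQ) (fun j => mul1 _ _ (aR j) (aQ j))
  calc ∫ j, tr ep b b' x j * (1 - R j) ∂(couplings x)
      = ∫ j, (tr ep b b' x j - tr ep b b' x j * R j) ∂(couplings x) := by
        refine integral_congr_ae (Eventually.of_forall fun j => ?_); simp only; ring
    _ = ∫ j, tr ep b b' x j * P j ∂(couplings x)
        - ∫ j, tr ep b b' x j * (R j * Q j) ∂(couplings x) := by
        rw [integral_sub i0 i2, n1, n2]
        simp only [mul_assoc]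
    _ = ∫ j, tr ep b b' x j ^ 2 ∂(couplings x) := by
        rw [← integral_sub i1 i3]
        refine integral_congr_ae (Eventually.of_forall fun j => ?_)
        change _ = (P j - Q j * R j) ^ 2
        change (P j - Q j * R j) * P j - (P j - Q j * R j) * (R j * Q j) = _
        ring

lemma pot_deriv [DecidableEq ι] (h : ℝ → ι → ℝ) (c t : ℝ)
    (hb : HasDerivAt (fun t => h t b') c t) (hne : ∀ i, i ≠ b' → ∀ t s, h t i = h s i)
    (S : V → Bool) :
    HasDerivAt (fun t => ∑ i, h t i * bondSpin ep S i) (c * bondSpin ep S b') t := by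
  have h1 : HasDerivAt (fun t => ∑ i, h t i * bondSpin ep S i)
      (∑ i, if i = b' then c * bondSpin ep S b' else 0) t := by
    refine HasDerivAt.fun_sum fun i _ => ?_
    by_cases hi : i = b'
    · subst hi; simpa using hb.mul_const (bondSpin ep S i)
    · simp only [hi, if_false]
      have : (fun t => h t i * bondSpin ep S i) = fun _ => h t i * bondSpin ep S i := by
        funext s; rw [hne i hi s t]
      rw [this]; exact hasDerivAt_const _ _
  simpa using h1

lemma tr_stein [DecidableEq ι] :
    ∫ g, g b' * tr ep b b' x (fun i => x i + g i) ∂(couplings (0 : ι → ℝ))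
      = ∫ g, x b' * (-2 * (tr ep b b' x (fun i => x i + g i) *
          gibbs ep x (fun i => x i + g i) (fun S => bondSpin ep S b')))
          ∂(couplings (0 : ι → ℝ)) := by
  have hsm : Measurable (fun g : ι → ℝ => fun b => x b + g b) := by fun_prop
  have mG : Measurable (fun g : ι → ℝ => tr ep b b' x (fun i => x i + g i)) :=
    (tr_measurable ep b b' x).comp hsm
  have mR : Measurable (fun g : ι → ℝ => gibbs ep x (fun i => x i + g i)
      (fun S => bondSpin ep S b')) := (gibbs_measurable ep x _).comp hsm
  refine stein_pi b' _ _ mG (((mG.mul mR).const_mul _).const_mul _)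
    (2 + |x b'| * 4) ?_ ?_ ?_
  · intro g
    have := tr_abs ep b b' x (fun i => x i + g i)
    have := abs_nonneg (x b')
    linarith
  · intro g
    have h1 := tr_abs ep b b' x (fun i => x i + g i)
    have h2 := gibbs_abs_le ep x (fun i => x i + g i) _ (bs_abs ep b')
    rw [abs_mul, abs_mul, abs_mul]
    have h3 : |tr ep b b' x (fun i => x i + g i)| *
      |gibbs ep x (fun i => x i + g i) (fun S => bondSpin ep S b')| ≤ 2 :=
      (mul_le_of_le_one_right (abs_nonneg _) h2).trans h1
    have h4 : |(-2 : ℝ)| = 2 := by norm_num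
    rw [h4]
    have := mul_le_mul_of_nonneg_left h3 (abs_nonneg (x b'))
    linarith
  · intro g y
    have hU : ∀ S, HasDerivAt (fun y => potential ep x
        (fun i => x i + Function.update g b' y i) S) (x b' * bondSpin ep S b') y := by
      intro S
      refine pot_deriv ep b' (fun y i => x i * (x i + Function.update g b' y i)) (x b') y ?_ ?_ S
      · simpa using ((hasDerivAt_id y).const_add (x b')).const_mul (x b')
      · intro i hi t s
        simp [Function.update_of_ne hi]
    have d : ∀ f, HasDerivAt (fun y => gibbs ep x (fun i => x i + Function.update g b' y i) f) _ y :=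
      fun f => gbU_hasDerivAt (fun y => potential ep x (fun i => x i + Function.update g b' y i)) f
        (fun S => bondSpin ep S b') (x b') y hU
    have h := (d (fun S => bondSpin ep S b * bondSpin ep S b')).sub
      ((d (fun S => bondSpin ep S b)).mul (d (fun S => bondSpin ep S b')))
    refine h.congr_deriv ?_
    have e1 : (fun S => bondSpin ep S b * bondSpin ep S b' * bondSpin ep S b')
        = fun S => bondSpin ep S b := by
      funext S; rw [mul_assoc, bondSpin_sq, mul_one]
    have e2 : (fun S => bondSpin ep S b' * bondSpin ep S b')
        = fun _ : V → Bool => (1 : ℝ) := by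
      funext S; rw [bondSpin_sq]
    have e3 : ∀ U : (V → Bool) → ℝ, gbU U (fun _ => (1 : ℝ)) = 1 := by
      intro U; unfold gbU; simp [div_self (zU_pos U).ne']
    rw [e1, e2, e3]
    unfold tr
    simp only [show ∀ j f, gibbs ep x j f = gbU (potential ep x j) f from fun _ _ => rfl]
    ring

lemma deriv_main [DecidableEq ι] :
    HasDerivAt (fun s => quenched (Function.update x b' s)
        (fun j => gibbs ep (Function.update x b' s) j (fun S => bondSpin ep S b)))
      (2 * x b' * quenched x (fun j => tr ep b b' x j ^ 2)) (x b') := by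
  let X : ℝ → ι → ℝ := fun s => Function.update x b' s
  have hX : X (x b') = x := Function.update_eq_self b' x
  have hsm : ∀ s, Measurable (fun g : ι → ℝ => fun b => X s b + g b) := fun s => by fun_prop
  have mT : ∀ s, Measurable (fun g : ι → ℝ => tr ep b b' (X s) (fun i => X s i + g i)) := fun s =>
    (tr_measurable ep b b' _).comp (hsm s)
  have mQ : ∀ s, Measurable (fun g : ι → ℝ => gibbs ep (X s) (fun i => X s i + g i)
      (fun S => bondSpin ep S b)) := fun s => (gibbs_measurable ep _ _).comp (hsm s)
  have hq : (fun s => quenched (Function.update x b' s)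
        (fun j => gibbs ep (Function.update x b' s) j (fun S => bondSpin ep S b)))
      = fun s => ∫ g, gibbs ep (X s) (fun i => X s i + g i) (fun S => bondSpin ep S b)
        ∂(couplings (0 : ι → ℝ)) := by
    funext s
    exact quenched_shift (X s) _ (gibbs_measurable ep _ _)
  have hi := integrable_coord (0 : ι → ℝ) b'
  obtain ⟨hintg, hder⟩ := hasDerivAt_integral_of_dominated_loc_of_deriv_le
    (μ := couplings (0 : ι → ℝ)) (x₀ := x b') (s := Metric.ball (x b') 1)
    (F := fun s g => gibbs ep (X s) (fun i => X s i + g i) (fun S => bondSpin ep S b))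
    (F' := fun s g => (2 * s + g b') * tr ep b b' (X s) (fun i => X s i + g i))
    (bound := fun g => (2 * (|x b'| + 1) + |g b'|) * 2)
    (Metric.ball_mem_nhds _ one_pos)
    (Eventually.of_forall fun s => (mQ s).aestronglyMeasurable)
    (integrable_of_bdd _ _ (mQ _) 1 fun g => gibbs_abs_le ep _ _ _ (bs_abs ep b))
    (((measurable_const.add (measurable_pi_apply b')).mul (mT _)).aestronglyMeasurable)
    (Eventually.of_forall fun g s hs => by
      rw [Real.norm_eq_abs, abs_mul]
      have h1 := tr_abs ep b b' (X s) (fun i => X s i + g i)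
      have h2 : |2 * s + g b'| ≤ 2 * (|x b'| + 1) + |g b'| := by
        refine (abs_add_le _ _).trans ?_
        rw [abs_mul, abs_two]
        have h3 : |s - x b'| < 1 := by simpa [Real.dist_eq] using hs
        have h4 : |s| ≤ |s - x b'| + |x b'| := by
          simpa using abs_add_le (s - x b') (x b')
        linarith
      exact mul_le_mul h2 h1 (abs_nonneg _) ((abs_nonneg _).trans h2))
    (((integrable_const _).add hi.abs).mul_const _)
    (Eventually.of_forall fun g s hs => by
      have hU : ∀ S, HasDerivAt (fun s => potential ep (X s) (fun i => X s i + g i) S)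
          ((2 * s + g b') * bondSpin ep S b') s := by
        intro S
        refine pot_deriv ep b' (fun s i => X s i * (X s i + g i)) (2 * s + g b') s ?_ ?_ S
        · simp only [X, Function.update_self]
          refine ((hasDerivAt_id s).mul ((hasDerivAt_id s).add_const (g b'))).congr_deriv ?_
          simp; ring
        · intro i hi t s
          simp [X, Function.update_of_ne hi]
      exact gbU_hasDerivAt (fun s => potential ep (X s) (fun i => X s i + g i))
        (fun S => bondSpin ep S b) (fun S => bondSpin ep S b') _ s hU)
  rw [hq]
  refine hder.congr_deriv ?_
  simp only [hX] at hintg ⊢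
  have mT' := mT (x b')
  rw [hX] at mT'
  have mR : Measurable (fun j : ι → ℝ => gibbs ep x j (fun S => bondSpin ep S b')) :=
    gibbs_measurable ep _ _
  have iT := integrable_of_bdd (couplings (0 : ι → ℝ)) _ mT' 2 (fun g => tr_abs ep b b' x _)
  have igT : Integrable (fun g : ι → ℝ => g b' * tr ep b b' x (fun i => x i + g i)) (couplings 0) :=
    hi.mul_bdd mT'.aestronglyMeasurable (Eventually.of_forall fun g => tr_abs ep b b' x _)
  have iTR : Integrable (fun g : ι → ℝ => x b' * (-2 * (tr ep b b' x (fun i => x i + g i) *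
          gibbs ep x (fun i => x i + g i) (fun S => bondSpin ep S b')))) (couplings 0) := by
    have h2 : Measurable (fun g : ι → ℝ => gibbs ep x (fun i => x i + g i)
        (fun S => bondSpin ep S b')) := mR.comp (by fun_prop)
    exact ((iT.mul_bdd h2.aestronglyMeasurable (Eventually.of_forall fun g =>
      gibbs_abs_le ep _ _ _ (bs_abs ep b'))).const_mul _).const_mul _
  calc ∫ g, (2 * x b' + g b') * tr ep b b' x (fun i => x i + g i) ∂(couplings (0 : ι → ℝ))
      = ∫ g, (2 * x b' * tr ep b b' x (fun i => x i + g i)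
          + g b' * tr ep b b' x (fun i => x i + g i)) ∂(couplings (0 : ι → ℝ)) := by
        refine integral_congr_ae (Eventually.of_forall fun j => ?_); simp only; ring
    _ = ∫ g, 2 * x b' * (tr ep b b' x (fun i => x i + g i) *
          (1 - gibbs ep x (fun i => x i + g i) (fun S => bondSpin ep S b')))
          ∂(couplings (0 : ι → ℝ)) := by
        rw [integral_add (iT.const_mul _) igT, tr_stein, ← integral_add (iT.const_mul _) iTR]
        refine integral_congr_ae (Eventually.of_forall fun j => ?_); simp only; ring
    _ = 2 * x b' * quenched x (fun j => tr ep b b' x j ^ 2) := by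
        rw [integral_const_mul]
        congr 1
        have := quenched_shift x (fun j => tr ep b b' x j *
          (1 - gibbs ep x j (fun S => bondSpin ep S b')))
          ((tr_measurable ep b b' x).mul (measurable_const.sub mR))
        rw [← this]
        exact nishimori_tr ep b b' x

end main

/-- Second Griffiths-type inequality on the Nishimori line: for all bonds
`b, b'`, the quenched correlation `[⟨S_b⟩]` is differentiable in `x_{b'}` (total derivative)
with `d[⟨S_b⟩]/dx_{b'} = 2 x_{b'} [(⟨S_b S_{b'}⟩ − ⟨S_b⟩⟨S_{b'}⟩)²] ≥ 0`; hence `[⟨S_b⟩]`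
is nondecreasing in each parameter `x_{b'}`. -/
theorem griffiths_second_inequality
    {V ι : Type*} [Fintype V] [DecidableEq V] [Fintype ι] [DecidableEq ι]
    (ep : ι → V × V) (hep : ∀ b, (ep b).1 ≠ (ep b).2)
    (x : ι → ℝ) (hx : ∀ b, 0 ≤ x b) (b b' : ι) :
    HasDerivAt (fun s => quenched (Function.update x b' s)
        (fun j => gibbs ep (Function.update x b' s) j (fun S => bondSpin ep S b)))
      (2 * x b' * quenched x (fun j =>
        (gibbs ep x j (fun S => bondSpin ep S b * bondSpin ep S b') -
          gibbs ep x j (fun S => bondSpin ep S b) *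
            gibbs ep x j (fun S => bondSpin ep S b')) ^ 2)) (x b') ∧
    0 ≤ 2 * x b' * quenched x (fun j =>
        (gibbs ep x j (fun S => bondSpin ep S b * bondSpin ep S b') -
          gibbs ep x j (fun S => bondSpin ep S b) *
            gibbs ep x j (fun S => bondSpin ep S b')) ^ 2) ∧
    MonotoneOn (fun s => quenched (Function.update x b' s)
        (fun j => gibbs ep (Function.update x b' s) j (fun S => bondSpin ep S b)))
      (Set.Ici (0 : ℝ)) := by
  have nn : ∀ y : ι → ℝ, 0 ≤ y b' → 0 ≤ 2 * y b' * quenched y (fun j => tr ep b b' y j ^ 2) := by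
    intro y hy
    exact mul_nonneg (by linarith) (integral_nonneg fun j => sq_nonneg _)
  refine ⟨deriv_main ep b b' x, nn x (hx b'), ?_⟩
  have hd : ∀ s, HasDerivAt (fun s => quenched (Function.update x b' s)
        (fun j => gibbs ep (Function.update x b' s) j (fun S => bondSpin ep S b)))
      (2 * s * quenched (Function.update x b' s)
        (fun j => tr ep b b' (Function.update x b' s) j ^ 2)) s := by
    intro s
    simpa using deriv_main ep b b' (Function.update x b' s)
  refine monotoneOn_of_deriv_nonneg (convex_Ici 0)
    (fun s _ => (hd s).continuousAt.continuousWithinAt)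
    (fun s _ => (hd s).differentiableAt.differentiableWithinAt) ?_
  intro s hs
  rw [interior_Ici] at hs
  rw [(hd s).deriv]
  simpa using nn (Function.update x b' s) (by simpa using le_of_lt hs)

end
end

section
/- Interpolation derivative along a corridor: fix x > 0 and a subset C ⊆ B of bonds, and for t ∈ [0,1] set x_b(t) = x√t for b ∈ C and x_b(t) = x for b ∉ C; let P(t) denote the quenched pressure with parameters {x_b(t)}. Then for every t ∈ (0,1], P is differentiable at t with d P(t)/dt = (x²/2) Σ_{b∈C} [⟨S_b⟩_t + 1]_t, where the subscript t indicates that both the Gaussian means and the Gibbs weights are evaluated at parameters {x_b(t)}. -/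
open MeasureTheory ProbabilityTheory Filter

noncomputable section

namespace Corridor

lemma spin_beq (a b : Bool) : spin (a == b) = spin a * spin b := by
  cases a <;> cases b <;> simp [spin]

lemma spin_sq (a : Bool) : spin a * spin a = 1 := by
  cases a <;> simp [spin]

variable {V ι : Type*}

lemma bondSpin_sq (ep : ι → V × V) (S : V → Bool) (b : ι) :
    bondSpin ep S b * bondSpin ep S b = 1 := by
  unfold bondSpin
  calc _ = (spin (S (ep b).1) * spin (S (ep b).1)) * (spin (S (ep b).2) * spin (S (ep b).2)) := by ring
    _ = 1 := by rw [spin_sq, spin_sq, one_mul]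

lemma abs_bondSpin (ep : ι → V × V) (S : V → Bool) (b : ι) : |bondSpin ep S b| = 1 := by
  have h := bondSpin_sq ep S b
  have h2 : |bondSpin ep S b| * |bondSpin ep S b| = 1 := by rw [abs_mul_abs_self, h]
  nlinarith [abs_nonneg (bondSpin ep S b)]

/-- Gauge transformation as an equivalence of spin configurations. -/
def gauge (S : V → Bool) : (V → Bool) ≃ (V → Bool) where
  toFun S' := fun v => S v == S' v
  invFun S' := fun v => S v == S' v
  left_inv S' := by funext v; cases h : S v <;> cases h' : S' v <;> simp [h, h']
  right_inv S' := by funext v; cases h : S v <;> cases h' : S' v <;> simp [h, h']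

lemma bondSpin_gauge (ep : ι → V × V) (S S' : V → Bool) (b : ι) :
    bondSpin ep (gauge S S') b = bondSpin ep S b * bondSpin ep S' b := by
  simp only [bondSpin, gauge, Equiv.coe_fn_mk, spin_beq]; ring

variable [Fintype ι]

lemma potential_gauge (ep : ι → V × V) (u j : ι → ℝ) (S S' : V → Bool) :
    potential ep u (fun b => bondSpin ep S b * j b) S' = potential ep u j (gauge S S') := by
  simp only [potential, bondSpin_gauge]
  exact Finset.sum_congr rfl fun b _ => by ring

variable [Fintype V] [DecidableEq V]

lemma partitionFn_pos (ep : ι → V × V) (u j : ι → ℝ) : 0 < partitionFn ep u j :=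
  Finset.sum_pos (fun _ _ => Real.exp_pos _) Finset.univ_nonempty

lemma partitionFn_gauge (ep : ι → V × V) (u j : ι → ℝ) (S : V → Bool) :
    partitionFn ep u (fun b => bondSpin ep S b * j b) = partitionFn ep u j := by
  simp only [partitionFn, potential_gauge]
  exact Equiv.sum_comp (gauge S) fun S' => Real.exp (potential ep u j S')

lemma gibbs_gauge (ep : ι → V × V) (u j : ι → ℝ) (S : V → Bool) (b : ι) :
    gibbs ep u (fun b => bondSpin ep S b * j b) (fun S' => bondSpin ep S' b)
      = bondSpin ep S b * gibbs ep u j (fun S' => bondSpin ep S' b) := by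
  unfold gibbs
  rw [partitionFn_gauge, ← mul_div_assoc]
  congr 1
  simp only [potential_gauge]
  rw [← Equiv.sum_comp (gauge S) fun S' => bondSpin ep S' b * Real.exp (potential ep u j S'),
    Finset.mul_sum]
  refine Finset.sum_congr rfl fun S' _ => ?_
  rw [bondSpin_gauge, ← mul_assoc, ← mul_assoc, bondSpin_sq, one_mul]

lemma abs_gibbs_le (ep : ι → V × V) (u j : ι → ℝ) (b : ι) :
    |gibbs ep u j (fun S => bondSpin ep S b)| ≤ 1 := by
  unfold gibbs
  rw [abs_div, abs_of_pos (partitionFn_pos ep u j), div_le_one (partitionFn_pos ep u j)]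
  refine (Finset.abs_sum_le_sum_abs _ _).trans (Finset.sum_le_sum fun S _ => ?_)
  rw [abs_mul, abs_bondSpin, one_mul, abs_of_pos (Real.exp_pos _)]

lemma gibbs_add_one (ep : ι → V × V) (u j : ι → ℝ) (b : ι) :
    gibbs ep u j (fun S => bondSpin ep S b + 1)
      = gibbs ep u j (fun S => bondSpin ep S b) + 1 := by
  unfold gibbs
  have h := (partitionFn_pos ep u j).ne'
  rw [div_add_one h]
  congr 1
  simp only [add_mul, one_mul, Finset.sum_add_distrib]
  rfl

lemma continuous_potential (ep : ι → V × V) (S : V → Bool) (u : ι → ℝ) :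
    Continuous (fun j => potential ep u j S) := by
  unfold potential; fun_prop

lemma continuous_partitionFn (ep : ι → V × V) (u : ι → ℝ) :
    Continuous (fun j => partitionFn ep u j) := by
  unfold partitionFn
  exact continuous_finsetSum _ fun S _ => Real.continuous_exp.comp (continuous_potential ep S u)

lemma continuous_gibbs (ep : ι → V × V) (u : ι → ℝ) (f : (V → Bool) → ℝ) :
    Continuous (fun j => gibbs ep u j f) := by
  unfold gibbs
  refine Continuous.div ?_ (continuous_partitionFn ep u) fun j => (partitionFn_pos ep u j).ne'
  exact continuous_finsetSum _ fun S _ =>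
    continuous_const.mul (Real.continuous_exp.comp (continuous_potential ep S u))



instance (u : ι → ℝ) : IsProbabilityMeasure (couplings u) := by
  unfold couplings; infer_instance

lemma couplings_density (u : ι → ℝ) :
    couplings u = (volume : Measure (ι → ℝ)).withDensity
      (fun j => ENNReal.ofReal (∏ i, gaussianPDFReal (u i) 1 (j i))) := by
  unfold couplings
  refine Measure.pi_eq fun s hs => ?_
  rw [withDensity_apply _ (MeasurableSet.univ_pi hs), volume_pi, Measure.restrict_pi_pi,
    ← ofReal_integral_eq_lintegral_ofReal]
  · rw [integral_fintype_prod_eq_prod (𝕜 := ℝ) (f := fun i => gaussianPDFReal (u i) 1),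
      ENNReal.ofReal_prod_of_nonneg]
    · exact Finset.prod_congr rfl fun i _ =>
        (gaussianReal_apply_eq_integral _ one_ne_zero _).symm
    · intro i _
      exact integral_nonneg fun _ => gaussianPDFReal_nonneg _ _ _
  · exact Integrable.fintype_prod (f := fun i => gaussianPDFReal (u i) 1)
      fun i => (integrable_gaussianPDFReal _ _).restrict
  · exact ae_of_all _ fun j => Finset.prod_nonneg fun i _ => gaussianPDFReal_nonneg _ _ _

lemma measurable_dens (u : ι → ℝ) :
    Measurable (fun j : ι → ℝ => ∏ i, gaussianPDFReal (u i) 1 (j i)) :=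
  Finset.measurable_prod _ fun i _ => (measurable_gaussianPDFReal _ _).comp (measurable_pi_apply i)

lemma dens_nonneg (u j : ι → ℝ) : 0 ≤ ∏ i, gaussianPDFReal (u i) 1 (j i) :=
  Finset.prod_nonneg fun i _ => gaussianPDFReal_nonneg _ _ _

lemma integral_couplings (u : ι → ℝ) (F : (ι → ℝ) → ℝ) :
    ∫ j, F j ∂(couplings u) = ∫ j, (∏ i, gaussianPDFReal (u i) 1 (j i)) * F j := by
  rw [couplings_density, integral_withDensity_eq_integral_toReal_smul
    (measurable_dens u).ennreal_ofReal (ae_of_all _ fun _ => ENNReal.ofReal_lt_top)]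
  simp only [ENNReal.toReal_ofReal (dens_nonneg u _), smul_eq_mul]

lemma integrable_couplings (u : ι → ℝ) (F : (ι → ℝ) → ℝ) :
    Integrable F (couplings u) ↔
      Integrable (fun j => (∏ i, gaussianPDFReal (u i) 1 (j i)) * F j) := by
  rw [couplings_density, integrable_withDensity_iff_integrable_smul'
    (measurable_dens u).ennreal_ofReal (ae_of_all _ fun _ => ENNReal.ofReal_lt_top)]
  simp only [ENNReal.toReal_ofReal (dens_nonneg u _), smul_eq_mul]

lemma dens_gauge (ep : ι → V × V) (u j : ι → ℝ) (S : V → Bool) :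
    ∏ i, gaussianPDFReal (bondSpin ep S i * u i) 1 (j i)
      = (∏ i, (Real.sqrt (2 * Real.pi))⁻¹ * Real.exp (-((j i) ^ 2 + (u i) ^ 2) / 2))
        * Real.exp (potential ep u j S) := by
  rw [potential, Real.exp_sum, ← Finset.prod_mul_distrib]
  refine Finset.prod_congr rfl fun i _ => ?_
  rw [mul_assoc, ← Real.exp_add]
  simp only [gaussianPDFReal, NNReal.coe_one, mul_one]
  congr 2
  linear_combination (-(u i)^2/2) * bondSpin_sq ep S i

lemma couplings_gauge (ep : ι → V × V) (u : ι → ℝ) (S : V → Bool) :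
    (couplings u).map (fun j b => bondSpin ep S b * j b)
      = couplings (fun b => bondSpin ep S b * u b) := by
  unfold couplings
  have h : ∀ i, (gaussianReal (u i) 1).map (fun y => bondSpin ep S i * y)
      = gaussianReal (bondSpin ep S i * u i) 1 := by
    intro i
    rw [gaussianReal_map_const_mul]
    congr 1
    ext
    simp [pow_two, bondSpin_sq]
  have hs : ∀ i, SigmaFinite ((gaussianReal (u i) 1).map (fun y => bondSpin ep S i * y)) := by
    intro i; rw [h]; infer_instance
  rw [Measure.pi_map_pi (f := fun i y => bondSpin ep S i * y) (fun i => by fun_prop)]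
  simp only [h]

lemma couplings_shift (u : ι → ℝ) :
    (couplings (0 : ι → ℝ)).map (fun j b => u b + j b) = couplings u := by
  unfold couplings
  have h : ∀ i, (gaussianReal ((0 : ι → ℝ) i) 1).map (fun y => u i + y)
      = gaussianReal (u i) 1 := by
    intro i
    rw [gaussianReal_map_const_add]
    simp
  have hs : ∀ i, SigmaFinite ((gaussianReal ((0 : ι → ℝ) i) 1).map (fun y => u i + y)) := by
    intro i; rw [h]; infer_instance
  rw [Measure.pi_map_pi (f := fun i y => u i + y) (fun i => by fun_prop)]
  simp only [h]

lemma integrable_coord (u : ι → ℝ) (b : ι) : Integrable (fun j => j b) (couplings u) :=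
  integrable_comp_eval (f := fun y : ℝ => y) (μ := fun b => gaussianReal (u b) 1)
    ((memLp_id_gaussianReal 1).integrable le_rfl)

lemma integral_coord (u : ι → ℝ) (b : ι) : ∫ j, j b ∂(couplings u) = u b := by
  unfold couplings
  rw [integral_comp_eval (f := fun y : ℝ => y) (μ := fun b => gaussianReal (u b) 1)
    (by fun_prop)]
  exact integral_id_gaussianReal


lemma integrable_gibbs (ep : ι → V × V) (u w : ι → ℝ) (b : ι) :
    Integrable (fun j => gibbs ep u j (fun S => bondSpin ep S b)) (couplings w) :=
  Integrable.of_bound (C := 1) (continuous_gibbs ep u _).aestronglyMeasurable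
    (ae_of_all _ fun j => abs_gibbs_le ep u j b)

lemma integrable_coord_gibbs (ep : ι → V × V) (u w : ι → ℝ) (b : ι) :
    Integrable (fun j => j b * gibbs ep u j (fun S => bondSpin ep S b)) (couplings w) := by
  refine (integrable_coord w b).mono
    ((continuous_apply b).mul (continuous_gibbs ep u _)).aestronglyMeasurable
    (ae_of_all _ fun j => ?_)
  rw [norm_mul]
  exact mul_le_of_le_one_right (norm_nonneg _) (abs_gibbs_le ep u j b)

/-- Nishimori identity for the bond energy. -/
lemma nishimori (ep : ι → V × V) (u : ι → ℝ) (b : ι) :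
    ∫ j, j b * gibbs ep u j (fun S => bondSpin ep S b) ∂(couplings u) = u b := by
  set F : (ι → ℝ) → ℝ := fun j => j b * gibbs ep u j (fun S => bondSpin ep S b) with hF
  have hFc : Continuous F := (continuous_apply b).mul (continuous_gibbs ep u _)
  set K : (ι → ℝ) → ℝ := fun j =>
    ∏ i, (Real.sqrt (2 * Real.pi))⁻¹ * Real.exp (-((j i) ^ 2 + (u i) ^ 2) / 2) with hK
  have h1 : ∀ S : V → Bool, ∫ j, F j ∂(couplings u)
      = ∫ j, K j * Real.exp (potential ep u j S) * F j := by
    intro S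
    have : ∫ j, F j ∂(couplings (fun b => bondSpin ep S b * u b)) = ∫ j, F j ∂(couplings u) := by
      rw [← couplings_gauge, integral_map (Continuous.aemeasurable (by fun_prop)) hFc.aestronglyMeasurable]
      refine integral_congr_ae (ae_of_all _ fun j => ?_)
      simp only [hF, gibbs_gauge]
      linear_combination (j b * gibbs ep u j (fun S => bondSpin ep S b)) * bondSpin_sq ep S b
    rw [← this, integral_couplings]
    simp only [dens_gauge, hK]
  have h1i : ∀ S : V → Bool, Integrable (fun j => K j * Real.exp (potential ep u j S) * F j) := by
    intro S
    have := (integrable_couplings (fun b => bondSpin ep S b * u b) F).1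
      (integrable_coord_gibbs ep u _ b)
    simpa only [dens_gauge] using this
  have h2 : ∀ S : V → Bool, ∫ j, bondSpin ep S b * (K j * Real.exp (potential ep u j S) * j b)
      = u b := by
    intro S
    have := integral_coord (fun b => bondSpin ep S b * u b) b
    rw [integral_couplings] at this
    simp only [dens_gauge] at this
    rw [integral_const_mul, this, ← mul_assoc, bondSpin_sq, one_mul]
  have h2i : ∀ S : V → Bool,
      Integrable (fun j => bondSpin ep S b * (K j * Real.exp (potential ep u j S) * j b)) := by
    intro S
    have := (integrable_couplings (fun b => bondSpin ep S b * u b) (fun j => j b)).1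
      (integrable_coord _ b)
    simp only [dens_gauge] at this
    exact this.const_mul _
  have h3 : ∑ _S : V → Bool, ∫ j, F j ∂(couplings u) = ∑ _S : V → Bool, u b := by
    rw [Finset.sum_congr rfl fun S _ => h1 S, ← Finset.sum_congr rfl fun S _ => h2 S,
      ← integral_finsetSum _ fun S _ => h1i S, ← integral_finsetSum _ fun S _ => h2i S]
    refine integral_congr_ae (ae_of_all _ fun j => ?_)
    simp only [hF]
    have hz := (partitionFn_pos ep u j).ne'
    have hg : partitionFn ep u j * gibbs ep u j (fun S => bondSpin ep S b)
      = ∑ S, bondSpin ep S b * Real.exp (potential ep u j S) := by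
      unfold gibbs; field_simp
    calc _ = K j * j b * (partitionFn ep u j * gibbs ep u j (fun S => bondSpin ep S b)) := by
          rw [← Finset.sum_mul, ← Finset.mul_sum]; unfold partitionFn; ring
      _ = _ := by
          rw [hg, Finset.mul_sum]
          exact Finset.sum_congr rfl fun S _ => by ring
  simp only [Finset.sum_const, nsmul_eq_mul] at h3
  exact mul_left_cancel₀ (by simp) h3

lemma abs_log_partitionFn_le (ep : ι → V × V) (u j : ι → ℝ) :
    |Real.log (partitionFn ep u j)| ≤
      Real.log (Fintype.card (V → Bool)) + ∑ b, |u b * j b| := by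
  have hU : ∀ S, |potential ep u j S| ≤ ∑ b, |u b * j b| := fun S => by
    refine (Finset.abs_sum_le_sum_abs _ _).trans (Finset.sum_le_sum fun b _ => ?_)
    rw [abs_mul, abs_bondSpin, mul_one]
  set M := ∑ b, |u b * j b| with hM
  have hc : (0 : ℝ) < Fintype.card (V → Bool) := by exact_mod_cast Fintype.card_pos
  have hc1 : (1 : ℝ) ≤ Fintype.card (V → Bool) := by exact_mod_cast Fintype.card_pos
  have hl := Real.log_nonneg hc1
  have up : partitionFn ep u j ≤ Fintype.card (V → Bool) * Real.exp M := by
    unfold partitionFn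
    refine (Finset.sum_le_card_nsmul _ _ (Real.exp M) fun S _ => ?_).trans (by simp)
    exact Real.exp_le_exp.2 ((le_abs_self _).trans (hU S))
  have lo : Fintype.card (V → Bool) * Real.exp (-M) ≤ partitionFn ep u j := by
    unfold partitionFn
    refine le_trans (by simp) (Finset.card_nsmul_le_sum _ _ (Real.exp (-M)) fun S _ => ?_)
    exact Real.exp_le_exp.2 (abs_le.1 (hU S)).1
  have e1 := Real.log_le_log (partitionFn_pos ep u j) up
  have e2 := Real.log_le_log (mul_pos hc (Real.exp_pos _)) lo
  rw [Real.log_mul hc.ne' (Real.exp_pos _).ne', Real.log_exp] at e1 e2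
  rw [abs_le]
  constructor <;> linarith

variable [DecidableEq ι]

/-- Corridor parameters. -/
def par (C : Finset ι) (x r : ℝ) : ι → ℝ := fun b => if b ∈ C then r else x

lemma hasDerivAt_log (ep : ι → V × V) (C : Finset ι) (x r : ℝ) (g : ι → ℝ) :
    HasDerivAt (fun r => Real.log (partitionFn ep (par C x r) (fun b => par C x r b + g b)))
      (∑ b ∈ C, (2 * r + g b) *
        gibbs ep (par C x r) (fun b => par C x r b + g b) (fun S => bondSpin ep S b)) r := by
  have hp : ∀ b, HasDerivAt (fun r => par C x r b) (if b ∈ C then 1 else 0) r := by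
    intro b
    unfold par
    split_ifs
    · exact hasDerivAt_id r
    · exact hasDerivAt_const r x
  have hU : ∀ S, HasDerivAt (fun r => potential ep (par C x r) (fun b => par C x r b + g b) S)
      (∑ b ∈ C, (2 * r + g b) * bondSpin ep S b) r := by
    intro S
    unfold potential
    have := HasDerivAt.fun_sum (u := Finset.univ) fun b _ =>
      ((hp b).mul ((hp b).add_const (g b))).mul_const (bondSpin ep S b)
    refine this.congr_deriv ?_
    rw [← Finset.sum_filter_add_sum_filter_not Finset.univ (· ∈ C),
      Finset.sum_eq_zero (s := Finset.univ.filter (¬ · ∈ C)), add_zero, Finset.filter_mem_eq_inter,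
      Finset.univ_inter]
    · refine Finset.sum_congr rfl fun b hb => ?_
      simp only [hb, par, if_true]; ring
    · intro b hb
      have hb' : b ∉ C := by simpa using hb
      simp [hb']
  have hZ : HasDerivAt (fun r => partitionFn ep (par C x r) (fun b => par C x r b + g b))
      (∑ S, Real.exp (potential ep (par C x r) (fun b => par C x r b + g b) S) *
        (∑ b ∈ C, (2 * r + g b) * bondSpin ep S b)) r := by
    unfold partitionFn
    exact HasDerivAt.fun_sum fun S _ => (hU S).exp
  refine (hZ.log (partitionFn_pos _ _ _).ne').congr_deriv ?_
  simp only [gibbs, ← mul_div_assoc, ← Finset.sum_div, Finset.mul_sum]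
  rw [Finset.sum_comm]
  congr 1
  exact Finset.sum_congr rfl fun b _ => Finset.sum_congr rfl fun S _ => by ring

lemma pressure_eq (ep : ι → V × V) (u : ι → ℝ) :
    pressure ep u = ∫ g, Real.log (partitionFn ep u (fun b => u b + g b)) ∂(couplings 0) := by
  unfold pressure quenched
  conv_lhs => rw [← couplings_shift u]
  rw [integral_map (Continuous.aemeasurable (by fun_prop))]
  exact ((continuous_partitionFn ep u).log
    fun j => (partitionFn_pos ep u j).ne').aestronglyMeasurable

lemma hasDerivAt_pressure (ep : ι → V × V) (C : Finset ι) (x r : ℝ) :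
    HasDerivAt (fun r => pressure ep (par C x r))
      (r * ∑ b ∈ C, ∫ j, gibbs ep (par C x r) j (fun S => bondSpin ep S b + 1)
        ∂(couplings (par C x r))) r := by
  simp only [pressure_eq]
  have hcs : ∀ u : ι → ℝ, Continuous (fun (g : ι → ℝ) b => u b + g b) := fun u => by fun_prop
  have hlc : ∀ r, Continuous
      (fun g : ι → ℝ => Real.log (partitionFn ep (par C x r) (fun b => par C x r b + g b))) := fun r =>
    ((continuous_partitionFn ep _).comp (hcs _)).log fun j => (partitionFn_pos ep _ _).ne'
  have key := hasDerivAt_integral_of_dominated_loc_of_deriv_le (𝕜 := ℝ)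
    (μ := couplings (0 : ι → ℝ)) (s := Metric.ball r 1) (x₀ := r)
    (F := fun r (g : ι → ℝ) => Real.log (partitionFn ep (par C x r) (fun b => par C x r b + g b)))
    (F' := fun r (g : ι → ℝ) => ∑ b ∈ C, (2 * r + g b) *
        gibbs ep (par C x r) (fun b => par C x r b + g b) (fun S => bondSpin ep S b))
    (bound := fun g : ι → ℝ => ∑ b ∈ C, (2 * (|r| + 1) + |g b|))
    (Metric.ball_mem_nhds r one_pos)
    (Eventually.of_forall fun r => (hlc r).aestronglyMeasurable)
    (by
      refine Integrable.mono' (g := fun g => Real.log (Fintype.card (V → Bool))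
        + ∑ b, |par C x r b * (par C x r b + g b)|) ?_ (hlc r).aestronglyMeasurable
        (ae_of_all _ fun g => abs_log_partitionFn_le ep _ _)
      refine (integrable_const _).add (integrable_finsetSum _ fun b _ => ?_)
      exact (((integrable_const _).add (integrable_coord 0 b)).const_mul _).abs)
    (by
      refine Continuous.aestronglyMeasurable (continuous_finsetSum _ fun b _ => ?_)
      exact (by fun_prop : Continuous fun g : ι → ℝ => 2 * r + g b).mul
        ((continuous_gibbs ep _ _).comp (hcs _)))
    (ae_of_all _ fun g y hy => by
      refine (Finset.abs_sum_le_sum_abs _ _).trans (Finset.sum_le_sum fun b _ => ?_)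
      rw [abs_mul]
      refine (mul_le_of_le_one_right (abs_nonneg _) (abs_gibbs_le ep _ _ b)).trans ?_
      refine (abs_add_le _ _).trans ?_
      have h1 : |y - r| < 1 := by simpa [Real.dist_eq] using hy
      have h2 := abs_sub_abs_le_abs_sub y r
      rw [abs_mul, abs_two]
      linarith)
    (integrable_finsetSum _ fun b _ => (integrable_const _).add (integrable_coord 0 b).abs)
    (ae_of_all _ fun g y _ => hasDerivAt_log ep C x y g)
  refine key.2.congr_deriv ?_
  have hIntb : ∀ b, Integrable (fun j : ι → ℝ => (r + j b) *
      gibbs ep (par C x r) j (fun S => bondSpin ep S b)) (couplings (par C x r)) := by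
    intro b
    simp only [add_mul]
    exact ((integrable_gibbs ep _ _ b).const_mul r).add (integrable_coord_gibbs ep _ _ b)
  calc _ = ∫ g, (fun j : ι → ℝ => ∑ b ∈ C, (r + j b) *
        gibbs ep (par C x r) j (fun S => bondSpin ep S b))
          (fun b => par C x r b + g b) ∂(couplings (0 : ι → ℝ)) := by
        refine integral_congr_ae (ae_of_all _ fun g => Finset.sum_congr rfl fun b hb => ?_)
        simp only [par, hb, if_true]; ring
    _ = ∫ j, ∑ b ∈ C, (r + j b) *
        gibbs ep (par C x r) j (fun S => bondSpin ep S b) ∂(couplings (par C x r)) := by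
        conv_rhs => rw [← couplings_shift (par C x r)]
        rw [integral_map (Continuous.aemeasurable (by fun_prop))]
        exact (continuous_finsetSum _ fun b _ =>
          (by fun_prop : Continuous fun g : ι → ℝ => r + g b).mul
          (continuous_gibbs ep _ _)).aestronglyMeasurable
    _ = _ := by
        rw [integral_finsetSum _ fun b _ => hIntb b, Finset.mul_sum]
        refine Finset.sum_congr rfl fun b hb => ?_
        simp only [add_mul, gibbs_add_one]
        rw [integral_add ((integrable_gibbs ep _ _ b).const_mul r)
          (integrable_coord_gibbs ep _ _ b), nishimori, integral_const_mul,
          integral_add (integrable_gibbs ep _ _ b) (integrable_const _)]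
        simp [par, hb, mul_add]

end Corridor

/-- Interpolation derivative along a corridor: with `x_b(t) = x√t` for
`b ∈ C` and `x_b(t) = x` otherwise, and `P(t)` the quenched pressure at parameters
`{x_b(t)}`, for every `t ∈ (0,1]` one has
`dP(t)/dt = (x²/2) Σ_{b∈C} [⟨S_b + 1⟩_t]_t`. -/
theorem corridor_interpolation_derivative
    {V ι : Type*} [Fintype V] [DecidableEq V] [Fintype ι] [DecidableEq ι]
    (ep : ι → V × V) (hep : ∀ b, (ep b).1 ≠ (ep b).2)
    (x : ℝ) (hx : 0 < x) (C : Finset ι) (t : ℝ) (ht : t ∈ Set.Ioc (0 : ℝ) 1) :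
    HasDerivAt
      (fun s => pressure ep (fun b => if b ∈ C then x * Real.sqrt s else x))
      (x ^ 2 / 2 * ∑ b ∈ C,
        quenched (fun b' => if b' ∈ C then x * Real.sqrt t else x)
          (fun j => gibbs ep (fun b' => if b' ∈ C then x * Real.sqrt t else x) j
            (fun S => bondSpin ep S b + 1))) t := by
  have hs : HasDerivAt (fun s => x * Real.sqrt s) (x * (1 / (2 * Real.sqrt t))) t :=
    (Real.hasDerivAt_sqrt ht.1.ne').const_mul x
  have h := HasDerivAt.comp t (Corridor.hasDerivAt_pressure ep C x (x * Real.sqrt t)) hs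
  refine h.congr_deriv ?_
  have h0 : Real.sqrt t ≠ 0 := (Real.sqrt_pos.2 ht.1).ne'
  unfold quenched
  change _ = x ^ 2 / 2 * ∑ b ∈ C, ∫ j, gibbs ep (Corridor.par C x (x * Real.sqrt t)) j
    (fun S => bondSpin ep S b + 1) ∂(couplings (Corridor.par C x (x * Real.sqrt t)))
  field_simp

end
end
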